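/- arXiv:1611.07207 — 4 statements merged into one kernel-verified Lean document; each statement's English description precedes it below -/
import Mathlib

section
/- For every θ > 0 there exists a Borel probability measure ν on ℝ, supported on [0,∞), such that for every λ ≥ 0, ∫ e^{−λt} dν(t) = exp(θ ∫_0^1 (e^{−λx}−1)/x dx). (That is, exp(θ ∫_0^1 (e^{−λx}−1)/x dx) is the Laplace transform of a probability distribution on [0,∞).) -/
open MeasureTheory Filter Topology

/-!
Every s-finite measure `π` on `[0, ∞)` with `∫ min(x, 1) dπ < ∞` is the Lévy measure of a law with
Laplace transform `exp ∫ (e^{-lx} - 1) dπ(x)`. Split `π` into finite measures `π_k` and let `X_k` be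
independent compound Poisson variables with intensities `π_k`: the Laplace transform of
`X = ∑ X_k` is the product of those of the `X_k`. The sum always exists in `[0, ∞]`, and it is
almost surely finite because `P(X < ∞) ≥ E e^{-lX}` for every `l > 0`, where the right-hand side
tends to `1` as `l → 0`. The generalized Dickman law is the case `π(dx) = θ dx / x` on `(0, 1]`.
-/

open ProbabilityTheory
open scoped ENNReal NNReal Nat

/-- The function `x ↦ e^{-x}` as a character of `([0, ∞], +)`, with `e^{-∞} = 0`. Laplace
transforms of measures on `[0, ∞]` are expressed through it. -/
noncomputable def expNeg : AddChar ℝ≥0∞ ℝ≥0∞ where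
  toFun x := EReal.exp (-(x : EReal))
  map_zero_eq_one' := by simp
  map_add_eq_mul' x y := by
    rw [EReal.coe_ennreal_add, EReal.neg_add (by simp) (by simp), sub_eq_add_neg, EReal.exp_add]

lemma expNeg_apply (x : ℝ≥0∞) : expNeg x = EReal.exp (-(x : EReal)) := rfl

lemma expNeg_top : expNeg ∞ = 0 := by simp [expNeg_apply]

lemma expNeg_ofReal {x : ℝ} (hx : 0 ≤ x) : expNeg (.ofReal x) = .ofReal (Real.exp (-x)) := by
  rw [expNeg_apply, EReal.coe_ennreal_ofReal, max_eq_left hx, ← EReal.coe_neg, EReal.exp_coe]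

lemma expNeg_le_one (x : ℝ≥0∞) : expNeg x ≤ 1 := by
  simpa [expNeg_apply] using EReal.coe_ennreal_nonneg x

lemma continuous_expNeg : Continuous expNeg :=
  ENNReal.continuous_exp.comp (continuous_neg.comp continuous_coe_ennreal_ereal)

@[fun_prop]
lemma measurable_expNeg : Measurable expNeg := continuous_expNeg.measurable

lemma one_sub_expNeg_le_min (x : ℝ≥0∞) : 1 - expNeg x ≤ min x 1 := by
  refine le_min ?_ tsub_le_self
  induction x with
  | top => simp
  | coe x =>
    rw [← ENNReal.ofReal_coe_nnreal, expNeg_ofReal x.coe_nonneg, ← ENNReal.ofReal_one,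
      ← ENNReal.ofReal_sub _ (Real.exp_pos _).le]
    exact ENNReal.ofReal_le_ofReal (by linarith [Real.one_sub_le_exp_neg x])

lemma hasProd_expNeg_tsum {ι : Type*} (x : ι → ℝ≥0∞) :
    HasProd (fun i ↦ expNeg (x i)) (expNeg (∑' i, x i)) := by
  have expNeg_sum (s : Finset ι) : ∏ i ∈ s, expNeg (x i) = expNeg (∑ i ∈ s, x i) :=
    (map_prod expNeg.toMonoidHom (fun i ↦ .ofAdd (x i)) s).symm
  simpa only [HasProd, expNeg_sum] using! (continuous_expNeg.tendsto _).comp ENNReal.summable.hasSum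

lemma expNeg_mul_tsum_pow_div_factorial {a : ℝ≥0∞} (ha : a ≠ ∞) :
    expNeg a * ∑' n : ℕ, (n ! : ℝ≥0∞)⁻¹ * a ^ n = 1 := by
  lift a to ℝ≥0 using ha
  have hsum := hasSum_one_poissonMeasure a
  rw [← ENNReal.tsum_mul_left, ← ENNReal.ofReal_one, ← hsum.tsum_eq,
    ENNReal.ofReal_tsum_of_nonneg (fun n ↦ by positivity) hsum.summable]
  refine tsum_congr fun n ↦ ?_
  rw [← ENNReal.ofReal_coe_nnreal, expNeg_ofReal a.coe_nonneg, mul_div_right_comm, div_eq_mul_inv,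
    mul_assoc, ENNReal.ofReal_mul (by positivity), ENNReal.ofReal_mul (by positivity),
    ENNReal.ofReal_pow a.coe_nonneg, ENNReal.ofReal_inv_of_pos (by positivity),
    ENNReal.ofReal_natCast]

section ConvolutionPowers

variable {M : Type*} [AddMonoid M] [MeasurableSpace M]

/-- The `n`-fold convolution power `π ∗ ⋯ ∗ π`, the unnormalized law of a sum of `n` independent
variables with law `π`. -/
noncomputable def convPow (π : Measure M) : ℕ → Measure M
  | 0 => .dirac 0
  | n + 1 => convPow π n ∗ π

/-- The law of `ξ₁ + ⋯ + ξ_N`, where the `ξᵢ` are independent with law `π / π(M)` and `N` is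
independent of them and Poisson distributed with mean `π(M)`. The weights `e^{-π(M)} / n!`
are chosen so that `π` need not be normalized (and may be zero). -/
noncomputable def compoundPoisson (π : Measure M) : Measure M :=
  expNeg (π .univ) • Measure.sum fun n : ℕ ↦ (n ! : ℝ≥0∞)⁻¹ • convPow π n

variable [MeasurableAdd₂ M]

lemma lintegral_convPow (π : Measure M) [SFinite π] {χ : AddChar M ℝ≥0∞} (hχ : Measurable χ)
    (n : ℕ) : ∫⁻ x, χ x ∂convPow π n = (∫⁻ x, χ x ∂π) ^ n := by
  induction n with
  | zero => simp [convPow, lintegral_dirac' _ hχ]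
  | succ n ih =>
    simp_rw [convPow, Measure.lintegral_conv hχ, AddChar.map_add_eq_mul,
      lintegral_const_mul _ hχ, lintegral_mul_const _ hχ, ih, pow_succ]

lemma lintegral_compoundPoisson (π : Measure M) [IsFiniteMeasure π] {χ : AddChar M ℝ≥0∞}
    (hχ : Measurable χ) (hχ_le : ∀ x, χ x ≤ 1) :
    ∫⁻ x, χ x ∂compoundPoisson π = expNeg (∫⁻ x, (1 - χ x) ∂π) := by
  have mass_eq : π .univ = ∫⁻ x, (1 - χ x) ∂π + ∫⁻ x, χ x ∂π := by
    rw [← lintegral_add_right _ hχ, ← lintegral_one]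
    simp only [tsub_add_cancel_of_le (hχ_le _)]
  have lintegral_ne_top : ∫⁻ x, χ x ∂π ≠ ∞ :=
    ne_top_of_le_ne_top (measure_ne_top π .univ) (mass_eq ▸ le_add_self)
  simp only [compoundPoisson, lintegral_smul_measure, lintegral_sum_measure,
    lintegral_convPow π hχ, smul_eq_mul]
  rw [mass_eq, AddChar.map_add_eq_mul, mul_assoc,
    expNeg_mul_tsum_pow_div_factorial lintegral_ne_top, mul_one]

instance (π : Measure M) [IsFiniteMeasure π] : IsProbabilityMeasure (compoundPoisson π) where
  measure_univ := by
    simpa using lintegral_compoundPoisson π (χ := 1) measurable_const (by simp)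

end ConvolutionPowers

section PoissonSums

lemma hasProd_lintegral_expNeg_tsum {ι : Type*} [Countable ι] (μ : ι → Measure ℝ≥0∞)
    [∀ i, IsProbabilityMeasure (μ i)] (l : ℝ≥0∞) :
    HasProd (fun i ↦ ∫⁻ x, expNeg (l * x) ∂μ i)
      (∫⁻ x, expNeg (l * ∑' i, x i) ∂Measure.infinitePi μ) := by
  have lintegral_finset_prod (s : Finset ι) :
      ∫⁻ x, ∏ i ∈ s, expNeg (l * x i) ∂Measure.infinitePi μ =
        ∏ i ∈ s, ∫⁻ x, expNeg (l * x) ∂μ i := by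
    rw [lintegral_prod_eq_prod_lintegral_of_indepFun s _
      (iIndepFun_infinitePi (X := fun _ x ↦ expNeg (l * x)) (by fun_prop)) (by fun_prop)]
    refine Finset.prod_congr rfl fun i _ ↦ ?_
    exact (measurePreserving_eval_infinitePi μ i).lintegral_comp
      (f := fun x ↦ expNeg (l * x)) (by fun_prop)
  simp only [HasProd, ← lintegral_finset_prod, ← ENNReal.tsum_mul_left]
  refine tendsto_lintegral_filter_of_dominated_convergence (fun _ ↦ 1)
    (.of_forall fun s ↦ by fun_prop)
    (.of_forall fun s ↦ .of_forall fun x ↦ Finset.prod_le_one' fun i _ ↦ expNeg_le_one _)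
    (by simp) (.of_forall fun x ↦ hasProd_expNeg_tsum _)

/-- The law of the sum of the points of a Poisson process on `[0, ∞]` with intensity `π`, encoded
as a sum of independent compound Poisson variables, one for each finite piece of `π`. -/
noncomputable def poissonSum (π : Measure ℝ≥0∞) [SFinite π] : Measure ℝ≥0∞ :=
  (Measure.infinitePi fun k ↦ compoundPoisson (sfiniteSeq π k)).map fun x ↦ ∑' k, x k

instance (π : Measure ℝ≥0∞) [SFinite π] : IsProbabilityMeasure (poissonSum π) :=
  Measure.isProbabilityMeasure_map (by fun_prop)

lemma lintegral_expNeg_poissonSum (π : Measure ℝ≥0∞) [SFinite π] (l : ℝ≥0∞) :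
    ∫⁻ x, expNeg (l * x) ∂poissonSum π = expNeg (∫⁻ x, (1 - expNeg (l * x)) ∂π) := by
  have transform_summand (k : ℕ) : ∫⁻ x, expNeg (l * x) ∂compoundPoisson (sfiniteSeq π k) =
      expNeg (∫⁻ x, (1 - expNeg (l * x)) ∂sfiniteSeq π k) :=
    lintegral_compoundPoisson _ (χ := expNeg.compAddMonoidHom (.mulLeft l))
      (measurable_expNeg.comp (measurable_const_mul l)) fun x ↦ expNeg_le_one _
  have transform_hasProd :=
    hasProd_lintegral_expNeg_tsum (fun k ↦ compoundPoisson (sfiniteSeq π k)) l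
  simp only [transform_summand] at transform_hasProd
  rw [poissonSum, lintegral_map (by fun_prop) (by fun_prop),
    transform_hasProd.unique (hasProd_expNeg_tsum _), ← lintegral_sum_measure, sum_sfiniteSeq]

lemma tendsto_lintegral_one_sub_expNeg {π : Measure ℝ≥0∞} (hπ_top : π {∞} = 0)
    (hπ : ∫⁻ x, min x 1 ∂π ≠ ∞) :
    Tendsto (fun n : ℕ ↦ ∫⁻ x, (1 - expNeg ((n : ℝ≥0∞)⁻¹ * x)) ∂π) atTop (𝓝 0) := by
  rw [← lintegral_zero (μ := π)]
  refine tendsto_lintegral_filter_of_dominated_convergence (fun x ↦ min x 1)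
    (.of_forall fun n ↦ by fun_prop) ?_ hπ ?_
  · filter_upwards [eventually_ge_atTop 1] with n hn
    refine .of_forall fun x ↦ (one_sub_expNeg_le_min _).trans ?_
    gcongr
    exact mul_le_of_le_one_left' (by simpa using hn)
  · filter_upwards [measure_eq_zero_iff_ae_notMem.1 hπ_top] with x hx
    have mul_tendsto : Tendsto (fun n : ℕ ↦ (n : ℝ≥0∞)⁻¹ * x) atTop (𝓝 0) := by
      simpa using ENNReal.Tendsto.mul_const ENNReal.tendsto_inv_nat_nhds_zero (.inr hx)
    simpa using ENNReal.Tendsto.sub tendsto_const_nhds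
      ((continuous_expNeg.tendsto 0).comp mul_tendsto) (.inl ENNReal.one_ne_top)

lemma poissonSum_singleton_top {π : Measure ℝ≥0∞} [SFinite π] (hπ_top : π {∞} = 0)
    (hπ : ∫⁻ x, min x 1 ∂π ≠ ∞) : poissonSum π {∞} = 0 := by
  rw [← prob_compl_eq_one_iff (measurableSet_singleton ∞)]
  refine le_antisymm prob_le_one ?_
  have transform_tendsto : Tendsto (fun n : ℕ ↦ ∫⁻ x, expNeg ((n : ℝ≥0∞)⁻¹ * x) ∂poissonSum π)
      atTop (𝓝 1) := by
    simp_rw [lintegral_expNeg_poissonSum]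
    simpa using! (continuous_expNeg.tendsto 0).comp (tendsto_lintegral_one_sub_expNeg hπ_top hπ)
  refine le_of_tendsto' transform_tendsto fun n ↦ ?_
  rw [← lintegral_indicator_one (measurableSet_singleton ∞).compl]
  refine lintegral_mono fun x ↦ ?_
  by_cases hx : x = ∞
  · simp [hx, ENNReal.mul_top, expNeg_top]
  · simpa [hx] using expNeg_le_one _

end PoissonSums

section LevyMeasures

lemma integrable_one_sub_exp {π : Measure ℝ} (hπ : ∀ᵐ x ∂π, 0 ≤ x)
    (hmin : Integrable (fun x ↦ min x 1) π) {l : ℝ} (hl : 0 ≤ l) :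
    Integrable (fun x ↦ 1 - Real.exp (-l * x)) π := by
  refine (hmin.const_mul (max l 1)).mono' (by fun_prop) ?_
  filter_upwards [hπ] with x hx
  have hlx : 0 ≤ l * x := mul_nonneg hl hx
  rw [neg_mul, Real.norm_eq_abs, abs_of_nonneg (by simpa using hlx),
    mul_min_of_nonneg _ _ (by positivity), mul_one]
  refine le_min ?_ ?_
  · calc 1 - Real.exp (-(l * x)) ≤ l * x := by linarith [Real.one_sub_le_exp_neg (l * x)]
      _ ≤ max l 1 * x := by gcongr; exact le_max_left l 1
  · linarith [le_max_right l 1, Real.exp_pos (-(l * x))]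

lemma expNeg_lintegral_map_ofReal {π : Measure ℝ} (hπ : ∀ᵐ x ∂π, 0 ≤ x)
    (hmin : Integrable (fun x ↦ min x 1) π) {l : ℝ} (hl : 0 ≤ l) :
    expNeg (∫⁻ x, (1 - expNeg (.ofReal l * x)) ∂π.map ENNReal.ofReal) =
      .ofReal (Real.exp (∫ x, (Real.exp (-l * x) - 1) ∂π)) := by
  have integrand_eq : ∀ᵐ x ∂π, 1 - expNeg (.ofReal l * .ofReal x) =
      .ofReal (1 - Real.exp (-l * x)) := by
    filter_upwards [hπ] with x hx
    rw [← ENNReal.ofReal_mul hl, expNeg_ofReal (mul_nonneg hl hx), ← ENNReal.ofReal_one,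
      ← ENNReal.ofReal_sub _ (Real.exp_pos _).le, neg_mul]
  have integrand_nonneg : ∀ᵐ x ∂π, 0 ≤ 1 - Real.exp (-l * x) := by
    filter_upwards [hπ] with x hx
    simpa using mul_nonneg hl hx
  rw [lintegral_map (by fun_prop) (by fun_prop), lintegral_congr_ae integrand_eq,
    ← ofReal_integral_eq_lintegral_ofReal (integrable_one_sub_exp hπ hmin hl) integrand_nonneg,
    expNeg_ofReal (integral_nonneg_of_ae integrand_nonneg), ← integral_neg]
  simp only [neg_sub]

lemma integral_exp_map_toReal {μ : Measure ℝ≥0∞} (hμ : μ {∞} = 0) {l : ℝ} (hl : 0 ≤ l) :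
    ∫ t, Real.exp (-l * t) ∂μ.map ENNReal.toReal =
      (∫⁻ x, expNeg (.ofReal l * x) ∂μ).toReal := by
  rw [integral_map (by fun_prop) (by fun_prop),
    integral_eq_lintegral_of_nonneg_ae (.of_forall fun x ↦ (Real.exp_pos _).le) (by fun_prop)]
  congr 1
  refine lintegral_congr_ae ?_
  filter_upwards [measure_eq_zero_iff_ae_notMem.1 hμ] with x hx
  rw [neg_mul, ← expNeg_ofReal (by positivity), ENNReal.ofReal_mul hl, ENNReal.ofReal_toReal hx]

theorem exists_laplace_eq_exp_integral {π : Measure ℝ} [SFinite π] (hπ : ∀ᵐ x ∂π, 0 ≤ x)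
    (hmin : Integrable (fun x ↦ min x 1) π) :
    ∃ ν : Measure ℝ, IsProbabilityMeasure ν ∧ ν (Set.Iio 0) = 0 ∧
      ∀ l : ℝ, 0 ≤ l →
        ∫ t, Real.exp (-l * t) ∂ν = Real.exp (∫ x, (Real.exp (-l * x) - 1) ∂π) := by
  set ρ := π.map ENNReal.ofReal
  have no_atom_top : ρ {∞} = 0 := by
    simp [ρ, Measure.map_apply ENNReal.measurable_ofReal (measurableSet_singleton ∞),
      Set.preimage]
  have lintegral_min_ne_top : ∫⁻ x, min x 1 ∂ρ ≠ ∞ := by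
    rw [lintegral_map (by fun_prop) (by fun_prop)]
    simpa [ENNReal.ofReal_min] using hmin.lintegral_lt_top.ne
  have top_null := poissonSum_singleton_top no_atom_top lintegral_min_ne_top
  refine ⟨(poissonSum ρ).map ENNReal.toReal, Measure.isProbabilityMeasure_map (by fun_prop), ?_,
    fun l hl ↦ ?_⟩
  · rw [Measure.map_apply ENNReal.measurable_toReal measurableSet_Iio]
    simp [Set.preimage, Set.mem_Iio, not_lt.2 ENNReal.toReal_nonneg]
  · rw [integral_exp_map_toReal top_null hl, lintegral_expNeg_poissonSum,
      expNeg_lintegral_map_ofReal hπ hmin hl, ENNReal.toReal_ofReal (Real.exp_pos _).le]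

end LevyMeasures

section Dickman

/-- The Lévy measure `θ x⁻¹ dx` on `(0, 1]` of the generalized Dickman distribution `GD(θ)`. -/
noncomputable def dickmanLevyMeasure (θ : ℝ) : Measure ℝ :=
  (volume.restrict (Set.Ioc 0 1)).withDensity fun x ↦ .ofReal (θ / x)

instance (θ : ℝ) : SFinite (dickmanLevyMeasure θ) := by
  unfold dickmanLevyMeasure; infer_instance

lemma ae_mem_Ioc_dickmanLevyMeasure (θ : ℝ) : ∀ᵐ x ∂dickmanLevyMeasure θ, x ∈ Set.Ioc 0 1 :=
  (withDensity_absolutelyContinuous _ _).ae_le (ae_restrict_mem measurableSet_Ioc)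

lemma toReal_ofReal_div_smul {θ x : ℝ} (hθ : 0 ≤ θ) (hx : 0 ≤ x) (y : ℝ) :
    (ENNReal.ofReal (θ / x)).toReal • y = θ * (y / x) := by
  rw [ENNReal.toReal_ofReal (by positivity), smul_eq_mul, div_mul_eq_mul_div, mul_div_assoc]

lemma integral_dickmanLevyMeasure {θ : ℝ} (hθ : 0 ≤ θ) (g : ℝ → ℝ) :
    ∫ x, g x ∂dickmanLevyMeasure θ = θ * ∫ x in Set.Ioc 0 1, g x / x := by
  rw [dickmanLevyMeasure, integral_withDensity_eq_integral_toReal_smul (by fun_prop)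
    (.of_forall fun x ↦ ENNReal.ofReal_lt_top), ← integral_const_mul]
  exact setIntegral_congr_fun measurableSet_Ioc fun x hx ↦ toReal_ofReal_div_smul hθ hx.1.le _

lemma integrable_min_dickmanLevyMeasure {θ : ℝ} (hθ : 0 ≤ θ) :
    Integrable (fun x ↦ min x 1) (dickmanLevyMeasure θ) := by
  rw [dickmanLevyMeasure, integrable_withDensity_iff_integrable_smul' (by fun_prop)
    (.of_forall fun x ↦ ENNReal.ofReal_lt_top)]
  refine (integrable_const θ).congr ?_
  filter_upwards [ae_restrict_mem measurableSet_Ioc] with x hx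
  rw [toReal_ofReal_div_smul hθ hx.1.le, min_eq_left hx.2, div_self hx.1.ne', mul_one]

end Dickman

/-- For every `θ > 0`, `exp (θ ∫_0^1 (e^{−λx}−1)/x dx)` is the Laplace transform of a
probability distribution supported on `[0,∞)` (the generalized Dickman distribution
`GD(θ)`). -/
theorem exists_generalized_dickman (θ : ℝ) (hθ : 0 < θ) :
    ∃ ν : Measure ℝ, IsProbabilityMeasure ν ∧ ν (Set.Iio 0) = 0 ∧
      ∀ l : ℝ, 0 ≤ l →
        ∫ t, Real.exp (-l * t) ∂ν =
          Real.exp (θ * ∫ x in Set.Ioc (0 : ℝ) 1, (Real.exp (-l * x) - 1) / x) := by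
  simpa only [integral_dickmanLevyMeasure hθ.le] using
    exists_laplace_eq_exp_integral ((ae_mem_Ioc_dickmanLevyMeasure θ).mono fun x hx ↦ hx.1.le)
      (integrable_min_dickmanLevyMeasure hθ.le)
end

section
/- Let θ > 0, let D_θ be a nonnegative random variable whose Laplace transform satisfies E[exp(−λ D_θ)] = exp(θ ∫_0^1 (e^{−λx}−1)/x dx) for all λ ≥ 0, and let U be uniformly distributed on [0,1] and independent of D_θ. Then U^{1/θ}(D_θ + 1) has the same distribution as D_θ. -/
open MeasureTheory ProbabilityTheory Filter Topology

/-! Write `φ` for the Laplace transform of `GD(θ)`. Differentiating its exponent gives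
`s φ'(s) = θ (exp (-s) - 1) φ(s)`, which says exactly that `u ↦ u φ(l u^{1/θ})` has derivative
`exp (-l u^{1/θ}) φ(l u^{1/θ})`. Integrating over `[0, 1]`, where the right side becomes the Laplace
transform of `U^{1/θ} (D_θ + 1)` conditioned on `U = u`, shows that the two variables have the same
Laplace transform. Its values at the natural numbers are the moments of `exp (-X)`, which determine
the law of a nonnegative `X` by Stone–Weierstrass. -/

section LaplaceUniqueness

open BoundedContinuousFunction

lemma measure_eq_of_integral_pow_eq {E : Type*} [MeasurableSpace E] [PseudoEMetricSpace E]
    [BorelSpace E] [CompleteSpace E] [SecondCountableTopology E] {μ ν : Measure E}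
    [IsFiniteMeasure μ] [IsFiniteMeasure ν] (g : E →ᵇ ℝ) (hg : Function.Injective g)
    (h : ∀ n : ℕ, ∫ x, g x ^ n ∂μ = ∫ x, g x ^ n ∂ν) : μ = ν := by
  have hsep : ((StarAlgebra.adjoin ℝ {g}).map (toContinuousMapStarₐ ℝ)).SeparatesPoints :=
    fun x y hxy ↦ ⟨g, ⟨toContinuousMapStarₐ ℝ g,
      ⟨g, StarAlgebra.self_mem_adjoin_singleton ℝ g, rfl⟩, rfl⟩, hg.ne hxy⟩
  refine ext_of_forall_mem_subalgebra_integral_eq_of_pseudoEMetric_complete_countable hsep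
    fun f hf ↦ ?_
  have hf_adjoin : f ∈ Algebra.adjoin ℝ {g} := by
    have hstar : star g = g := by ext; simp
    rwa [← StarSubalgebra.mem_toSubalgebra, StarAlgebra.adjoin_toSubalgebra, Set.star_singleton,
      hstar, Set.union_self] at hf
  obtain ⟨p, rfl⟩ : ∃ p, Polynomial.aeval g p = f := by
    rwa [Algebra.adjoin_singleton_eq_range_aeval] at hf_adjoin
  have integral_aeval (ρ : Measure E) [IsFiniteMeasure ρ] :
      ∫ x, Polynomial.aeval g p x ∂ρ =
        ∑ i ∈ Finset.range (p.natDegree + 1), p.coeff i * ∫ x, g x ^ i ∂ρ := by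
    simp only [Polynomial.aeval_eq_sum_range, coe_sum, Finset.sum_apply]
    rw [integral_finsetSum _ fun i _ ↦ (p.coeff i • g ^ i).integrable ρ]
    simp only [coe_smul, smul_eq_mul, coe_pow, Pi.pow_apply, integral_const_mul]
  simp only [integral_aeval, h]

variable {Ω Ω' : Type*} [MeasurableSpace Ω] [MeasurableSpace Ω'] {μ : Measure Ω} {ν : Measure Ω'}
  {X : Ω → ℝ} {Y : Ω' → ℝ}

lemma map_coe_map_toNNReal (hX : AEMeasurable X μ) (hX_nonneg : 0 ≤ᵐ[μ] X) :
    (μ.map fun ω ↦ (X ω).toNNReal).map ((↑) : NNReal → ℝ) = μ.map X := by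
  rw [AEMeasurable.map_map_of_aemeasurable (by fun_prop) (by fun_prop)]
  refine Measure.map_congr ?_
  filter_upwards [hX_nonneg] with ω hω using Real.coe_toNNReal _ hω

lemma integral_exp_neg_pow_map_toNNReal (hX : AEMeasurable X μ) (hX_nonneg : 0 ≤ᵐ[μ] X) (n : ℕ) :
    ∫ x : NNReal, Real.exp (-x) ^ n ∂(μ.map fun ω ↦ (X ω).toNNReal) = mgf X μ (-n) := by
  rw [integral_map (by fun_prop) (by fun_prop)]
  refine integral_congr_ae ?_
  filter_upwards [hX_nonneg] with ω hω
  rw [← Real.exp_nat_mul, Real.coe_toNNReal _ hω, mul_neg, neg_mul]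

theorem map_eq_map_of_mgf_neg_natCast_eq [IsFiniteMeasure μ] [IsFiniteMeasure ν]
    (hX : AEMeasurable X μ) (hY : AEMeasurable Y ν) (hX_nonneg : 0 ≤ᵐ[μ] X)
    (hY_nonneg : 0 ≤ᵐ[ν] Y) (h : ∀ n : ℕ, mgf X μ (-n) = mgf Y ν (-n)) :
    μ.map X = ν.map Y := by
  let expNeg : NNReal →ᵇ ℝ := .ofNormedAddCommGroup (fun x ↦ Real.exp (-x)) (by fun_prop) 1 <| by
    simp
  have expNeg_injective : Function.Injective expNeg := fun x y hxy ↦ by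
    simpa [expNeg] using hxy
  have map_toNNReal_eq : (μ.map fun ω ↦ (X ω).toNNReal) = ν.map fun ω ↦ (Y ω).toNNReal := by
    refine measure_eq_of_integral_pow_eq expNeg expNeg_injective fun n ↦ ?_
    calc ∫ x, expNeg x ^ n ∂(μ.map fun ω ↦ (X ω).toNNReal)
        = mgf X μ (-n) := integral_exp_neg_pow_map_toNNReal hX hX_nonneg n
      _ = mgf Y ν (-n) := h n
      _ = ∫ x, expNeg x ^ n ∂(ν.map fun ω ↦ (Y ω).toNNReal) :=
          (integral_exp_neg_pow_map_toNNReal hY hY_nonneg n).symm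
  rw [← map_coe_map_toNNReal hX hX_nonneg, ← map_coe_map_toNNReal hY hY_nonneg, map_toNNReal_eq]

end LaplaceUniqueness

section Expectation

variable {Ω : Type*} [MeasurableSpace Ω] {P : Measure Ω}

lemma integrable_exp_neg_mul_of_nonneg [IsFiniteMeasure P] {X : Ω → ℝ} {l : ℝ} (hl : 0 ≤ l)
    (hX : AEMeasurable X P) (hX_nonneg : 0 ≤ᵐ[P] X) :
    Integrable (fun ω ↦ Real.exp (-l * X ω)) P := by
  simpa using integrable_exp_mul_of_le l 0 hl hX.neg (hX_nonneg.mono fun _ h ↦ neg_nonpos.2 h)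

lemma mgf_mul_of_indepFun [IsFiniteMeasure P] {X Y : Ω → ℝ} {t : ℝ} (hXY : IndepFun X Y P)
    (hX : AEMeasurable X P) (hY : AEMeasurable Y P)
    (hint : Integrable (fun ω ↦ Real.exp (t * (X ω * Y ω))) P) :
    mgf (fun ω ↦ X ω * Y ω) P t = ∫ ω, mgf Y P (t * X ω) ∂P := by
  have hprod := (indepFun_iff_map_prod_eq_prod_map_map hX hY).1 hXY
  have hint_prod : Integrable (fun p : ℝ × ℝ ↦ Real.exp (t * (p.1 * p.2)))
      ((P.map X).prod (P.map Y)) := by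
    rw [← hprod]
    exact (integrable_map_measure (by fun_prop) (by fun_prop)).2 hint
  have inner_eq_mgf (x : ℝ) : ∫ y, Real.exp (t * (x * y)) ∂P.map Y = mgf Y P (t * x) := by
    rw [integral_map hY (by fun_prop)]
    simp only [mgf, mul_assoc]
  calc mgf (fun ω ↦ X ω * Y ω) P t
      = ∫ p, Real.exp (t * (p.1 * p.2)) ∂(P.map X).prod (P.map Y) := by
        rw [← hprod, integral_map (by fun_prop) (by fun_prop)]
        rfl
    _ = ∫ x, ∫ y, Real.exp (t * (x * y)) ∂P.map Y ∂P.map X := integral_prod _ hint_prod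
    _ = ∫ ω, ∫ y, Real.exp (t * (X ω * y)) ∂P.map Y ∂P :=
        integral_map hX hint_prod.integral_prod_left.aestronglyMeasurable
    _ = ∫ ω, mgf Y P (t * X ω) ∂P := by simp only [inner_eq_mgf]

lemma mgf_mul_add_const_of_indepFun [IsFiniteMeasure P] {X Y : Ω → ℝ} {c t : ℝ}
    (hXY : IndepFun X Y P) (hX : AEMeasurable X P) (hY : AEMeasurable Y P)
    (hint : Integrable (fun ω ↦ Real.exp (t * (X ω * (Y ω + c)))) P) :
    mgf (fun ω ↦ X ω * (Y ω + c)) P t =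
      ∫ ω, mgf Y P (t * X ω) * Real.exp (t * X ω * c) ∂P := by
  have hX_indep_add : IndepFun X (fun ω ↦ Y ω + c) P :=
    hXY.comp (ψ := fun y ↦ y + c) measurable_id (by fun_prop)
  simpa only [mgf_add_const] using mgf_mul_of_indepFun hX_indep_add hX (hY.add_const c) hint

lemma integral_comp_of_map_eq_restrict_Icc {E : Type*} [NormedAddCommGroup E] [NormedSpace ℝ E]
    {U : Ω → ℝ} {a b : ℝ} (hab : a ≤ b) (hU : AEMeasurable U P)
    (hU_map : P.map U = volume.restrict (Set.Icc a b)) {f : ℝ → E}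
    (hf : AEStronglyMeasurable f (volume.restrict (Set.Icc a b))) :
    ∫ ω, f (U ω) ∂P = ∫ u in a..b, f u := by
  rw [intervalIntegral.integral_of_le hab, ← integral_Icc_eq_integral_Ioc, ← hU_map,
    integral_map hU (hU_map ▸ hf)]

end Expectation

section DslopeIntegral

lemma continuous_dslope {𝕜 E : Type*} [NontriviallyNormedField 𝕜] [NormedAddCommGroup E]
    [NormedSpace 𝕜 E] {f : 𝕜 → E} {a : 𝕜} (hf : Continuous f) (ha : DifferentiableAt 𝕜 f a) :
    Continuous (dslope f a) :=
  continuousOn_univ.1 <| (continuousOn_dslope univ_mem).2 ⟨hf.continuousOn, ha⟩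

lemma setIntegral_Ioc_sub_div_eq_integral_dslope (f : ℝ → ℝ) (s : ℝ) :
    ∫ x in Set.Ioc (0 : ℝ) 1, (f (s * x) - f 0) / x = ∫ y in (0 : ℝ)..s, dslope f 0 y := by
  have substitution :
      s * ∫ x in (0 : ℝ)..1, dslope f 0 (s * x) = ∫ y in (0 : ℝ)..s, dslope f 0 y := by
    simp only [intervalIntegral.mul_integral_comp_mul_left, mul_zero, mul_one]
  rw [← substitution, intervalIntegral.integral_of_le zero_le_one, ← integral_const_mul]
  refine setIntegral_congr_fun measurableSet_Ioc fun x hx ↦ ?_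
  have hx_ne : x ≠ 0 := hx.1.ne'
  have hdslope : s * x * dslope f 0 (s * x) = f (s * x) - f 0 := by
    simpa using sub_smul_dslope f 0 (s * x)
  simp only [← hdslope]
  field_simp

lemma hasDerivAt_setIntegral_Ioc_sub_div {f : ℝ → ℝ} (hf : Continuous f)
    (hf_zero : DifferentiableAt ℝ f 0) (s : ℝ) :
    HasDerivAt (fun s ↦ ∫ x in Set.Ioc (0 : ℝ) 1, (f (s * x) - f 0) / x) (dslope f 0 s) s := by
  simp only [setIntegral_Ioc_sub_div_eq_integral_dslope]
  exact ((continuous_dslope hf hf_zero).integral_hasStrictDerivAt 0 s).hasDerivAt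

end DslopeIntegral

section DickmanLaplace

/-- The Laplace transform of the generalized Dickman distribution `GD(θ)`, extended to all real
arguments by the same formula. -/
noncomputable def dickmanLaplace (θ l : ℝ) : ℝ :=
  Real.exp (θ * ∫ x in Set.Ioc (0 : ℝ) 1, (Real.exp (-l * x) - 1) / x)

variable {θ : ℝ}

lemma hasDerivAt_dickmanLaplace (θ s : ℝ) :
    HasDerivAt (dickmanLaplace θ)
      (dickmanLaplace θ s * (θ * dslope (fun y ↦ Real.exp (-y)) 0 s)) s := by
  have hexponent := hasDerivAt_setIntegral_Ioc_sub_div (f := fun y ↦ Real.exp (-y))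
    (by fun_prop) (by fun_prop) s
  simp only [neg_zero, Real.exp_zero, ← neg_mul] at hexponent
  exact (hexponent.const_mul θ).exp

@[fun_prop]
lemma continuous_dickmanLaplace (θ : ℝ) : Continuous (dickmanLaplace θ) :=
  continuous_iff_continuousAt.2 fun s ↦ (hasDerivAt_dickmanLaplace θ s).continuousAt

lemma mul_deriv_dickmanLaplace (θ s : ℝ) :
    s * deriv (dickmanLaplace θ) s = θ * (Real.exp (-s) - 1) * dickmanLaplace θ s := by
  have hdslope : s * dslope (fun y ↦ Real.exp (-y)) 0 s = Real.exp (-s) - 1 := by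
    simpa using sub_smul_dslope (fun y : ℝ ↦ Real.exp (-y)) 0 s
  rw [(hasDerivAt_dickmanLaplace θ s).deriv, ← hdslope]
  ring

lemma hasDerivAt_mul_dickmanLaplace_rpow (hθ : θ ≠ 0) (l : ℝ) {u : ℝ} (hu : 0 < u) :
    HasDerivAt (fun u ↦ u * dickmanLaplace θ (l * u ^ (1 / θ)))
      (dickmanLaplace θ (l * u ^ (1 / θ)) * Real.exp (-(l * u ^ (1 / θ)))) u := by
  set s := l * u ^ (1 / θ) with hs
  have hs_deriv : HasDerivAt (fun u ↦ l * u ^ (1 / θ)) (s / (θ * u)) u := by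
    refine ((Real.hasDerivAt_rpow_const (Or.inl hu.ne')).const_mul l).congr_deriv ?_
    rw [Real.rpow_sub_one hu.ne', hs]
    field_simp
  have hφ_deriv := (hasDerivAt_dickmanLaplace θ s).differentiableAt.hasDerivAt
  refine ((hasDerivAt_id' u).mul (hφ_deriv.comp u hs_deriv)).congr_deriv ?_
  calc 1 * dickmanLaplace θ s + u * (deriv (dickmanLaplace θ) s * (s / (θ * u)))
      = dickmanLaplace θ s + s * deriv (dickmanLaplace θ) s / θ := by field_simp
    _ = dickmanLaplace θ s * Real.exp (-s) := by
        rw [mul_deriv_dickmanLaplace]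
        field_simp
        ring

lemma continuous_dickmanLaplace_rpow_mul_exp_neg (hθ : 0 ≤ θ) (l : ℝ) :
    Continuous fun u : ℝ ↦ dickmanLaplace θ (l * u ^ (1 / θ)) * Real.exp (-(l * u ^ (1 / θ))) := by
  have hrpow : Continuous fun u : ℝ ↦ u ^ (1 / θ) := Real.continuous_rpow_const (by positivity)
  fun_prop

theorem integral_dickmanLaplace_rpow_mul_exp_neg (hθ : 0 < θ) (l : ℝ) :
    ∫ u in (0 : ℝ)..1, dickmanLaplace θ (l * u ^ (1 / θ)) * Real.exp (-(l * u ^ (1 / θ))) =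
      dickmanLaplace θ l := by
  have hrpow : Continuous fun u : ℝ ↦ u ^ (1 / θ) := Real.continuous_rpow_const (by positivity)
  rw [intervalIntegral.integral_eq_sub_of_hasDerivAt_of_le zero_le_one (by fun_prop)
    (fun u hu ↦ hasDerivAt_mul_dickmanLaplace_rpow hθ.ne' l hu.1)
    ((continuous_dickmanLaplace_rpow_mul_exp_neg hθ.le l).intervalIntegrable 0 1)]
  simp

end DickmanLaplace

/-- Equation (1.2) of Pinsky: if `D_θ` has the generalized Dickman distribution `GD(θ)`
(characterized by its Laplace transform) and `U` is uniform on `[0,1]` and independent of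
`D_θ`, then `U^{1/θ}(D_θ + 1)` has the same distribution as `D_θ`. -/
theorem dickman_distributional_identity
    {Ω : Type*} [MeasurableSpace Ω] (P : Measure Ω) [IsProbabilityMeasure P]
    (θ : ℝ) (hθ : 0 < θ)
    (D U : Ω → ℝ) (hDmeas : Measurable D) (hUmeas : Measurable U)
    (hDnonneg : ∀ᵐ ω ∂P, 0 ≤ D ω)
    (hU : Measure.map U P = volume.restrict (Set.Icc (0 : ℝ) 1))
    (hindep : IndepFun U D P)
    (hLaplace : ∀ l : ℝ, 0 ≤ l →
      ∫ ω, Real.exp (-l * D ω) ∂P =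
        Real.exp (θ * ∫ x in Set.Ioc (0 : ℝ) 1, (Real.exp (-l * x) - 1) / x)) :
    Measure.map (fun ω => U ω ^ (1 / θ) * (D ω + 1)) P = Measure.map D P := by
  have hU_nonneg : ∀ᵐ ω ∂P, 0 ≤ U ω :=
    ae_of_ae_map hUmeas.aemeasurable <| hU ▸ (ae_restrict_mem measurableSet_Icc).mono fun _ h ↦ h.1
  have hX_nonneg : ∀ᵐ ω ∂P, 0 ≤ U ω ^ (1 / θ) * (D ω + 1) := by
    filter_upwards [hU_nonneg, hDnonneg] with ω hUω hDω
    positivity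
  have hmgf : ∀ l, 0 ≤ l → mgf D P (-l) = dickmanLaplace θ l := hLaplace
  refine map_eq_map_of_mgf_neg_natCast_eq (by fun_prop) (by fun_prop) hX_nonneg hDnonneg fun n ↦ ?_
  calc mgf (fun ω ↦ U ω ^ (1 / θ) * (D ω + 1)) P (-n)
      = ∫ ω, mgf D P (-n * U ω ^ (1 / θ)) * Real.exp (-n * U ω ^ (1 / θ) * 1) ∂P :=
        mgf_mul_add_const_of_indepFun
          (hindep.comp (φ := fun u ↦ u ^ (1 / θ)) (by fun_prop) measurable_id) (by fun_prop)
          (by fun_prop) (integrable_exp_neg_mul_of_nonneg n.cast_nonneg (by fun_prop) hX_nonneg)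
    _ = ∫ ω, dickmanLaplace θ (n * U ω ^ (1 / θ)) * Real.exp (-(n * U ω ^ (1 / θ))) ∂P := by
        refine integral_congr_ae ?_
        filter_upwards [hU_nonneg] with ω hω
        rw [neg_mul, mul_one, hmgf _ (by positivity)]
    _ = ∫ u in (0 : ℝ)..1, dickmanLaplace θ (n * u ^ (1 / θ)) * Real.exp (-(n * u ^ (1 / θ))) :=
        integral_comp_of_map_eq_restrict_Icc zero_le_one hUmeas.aemeasurable hU
          (continuous_dickmanLaplace_rpow_mul_exp_neg hθ.le n).aestronglyMeasurable
    _ = dickmanLaplace θ n := integral_dickmanLaplace_rpow_mul_exp_neg hθ n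
    _ = mgf D P (-n) := (hmgf n n.cast_nonneg).symm
end

section
/- Let θ > 0, let D be a nonnegative random variable, and let U be uniformly distributed on [0,1] and independent of D, such that U^{1/θ}(D+1) has the same distribution as D. Let F(x) = P(D ≤ x) be the distribution function of D. Then: (1) F(x) = θ x^θ ∫_{x−1}^∞ F(v)(1+v)^{−1−θ} dv for all x > 0; (2) F is continuous on ℝ; and (3) F(x) = C_θ x^θ for all x ∈ [0,1], where C_θ = θ ∫_0^∞ F(v)(1+v)^{−1−θ} dv. -/
open MeasureTheory ProbabilityTheory Filter Topology

/-!
The law `ν` of `D` satisfies `ν = Law (U ^ (1 / θ) * (D + 1))` with `U` and `D` independent.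
Conditioning on `U = u` turns this into `F x = ∫ u in (0, 1), F (x * u ^ (-(1 / θ)) - 1)`, and the
substitution `u = (x / (1 + v)) ^ θ` gives the integral formula. Conditioning on `D = d ≠ -1`
instead shows that `ν` has no atom, because `u ↦ u ^ (1 / θ) * (d + 1)` is injective; hence `F` is
continuous and vanishes on `(-∞, 0]`, so that for `x ≤ 1` the integral over `(x - 1, ∞)` no longer
depends on `x`.
-/

lemma continuous_cdf (μ : Measure ℝ) [IsProbabilityMeasure μ] [NullSingletonClass μ] :
    Continuous (cdf μ) := by
  refine continuous_iff_continuousAt.2 fun x => ?_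
  have jump_nonpos : cdf μ x - Function.leftLim (cdf μ) x ≤ 0 := by
    rw [← ENNReal.ofReal_eq_zero, ← StieltjesFunction.measure_singleton, measure_cdf,
      measure_singleton]
  rw [(monotone_cdf μ).continuousAt_iff_leftLim_eq_rightLim, StieltjesFunction.rightLim_eq]
  exact le_antisymm ((monotone_cdf μ).leftLim_le le_rfl) (sub_nonpos.1 jump_nonpos)

lemma cdf_eq_zero_of_nonpos {μ : Measure ℝ} [IsProbabilityMeasure μ] [NullSingletonClass μ]
    (hμ : ∀ᵐ d ∂μ, 0 ≤ d) {x : ℝ} (hx : x ≤ 0) : cdf μ x = 0 := by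
  have hIic : μ (Set.Iic x) = 0 := by
    rw [← measure_congr Iio_ae_eq_Iic]
    refine measure_mono_null (fun d hd => ?_) (ae_iff.1 hμ)
    exact not_le.2 (lt_of_lt_of_le hd hx)
  rw [cdf_eq_real, measureReal_def, hIic, ENNReal.toReal_zero]

lemma image_div_one_add_rpow_Ioi {θ x : ℝ} (hθ : 0 < θ) (hx : 0 < x) :
    (fun v : ℝ => (x / (1 + v)) ^ θ) '' Set.Ioi (x - 1) = Set.Ioo 0 1 := by
  ext u
  constructor
  · rintro ⟨v, hv, rfl⟩
    have hxv : x < 1 + v := sub_lt_iff_lt_add'.1 hv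
    have hv0 : 0 < 1 + v := hx.trans hxv
    exact ⟨by positivity, Real.rpow_lt_one (by positivity) ((div_lt_one hv0).2 hxv) hθ⟩
  · rintro ⟨hu0, hu1⟩
    refine ⟨x / u ^ θ⁻¹ - 1, ?_, ?_⟩
    · have hroot : u ^ θ⁻¹ < 1 := Real.rpow_lt_one hu0.le hu1 (inv_pos.2 hθ)
      have hx_lt : x < x / u ^ θ⁻¹ :=
        (lt_div_iff₀ (by positivity)).2 (mul_lt_of_lt_one_right hx hroot)
      exact sub_lt_sub_right hx_lt 1
    · simp only [add_sub_cancel]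
      rw [div_div_cancel₀ hx.ne', Real.rpow_inv_rpow hu0.le hθ.ne']

lemma hasDerivAt_div_one_add_rpow (θ : ℝ) {x v : ℝ} (hx : 0 < x) (hv : 0 < 1 + v) :
    HasDerivAt (fun v : ℝ => (x / (1 + v)) ^ θ) (-(θ * x ^ θ * (1 + v) ^ (-1 - θ))) v := by
  have hpow : HasDerivAt (fun v : ℝ => x ^ θ * (1 + v) ^ (-θ))
      (x ^ θ * (1 * (-θ) * (1 + v) ^ (-θ - 1))) v :=
    (((hasDerivAt_id v).const_add 1).rpow_const (Or.inl hv.ne')).const_mul _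
  refine (hpow.congr_of_eventuallyEq ?_).congr_deriv ?_
  · filter_upwards [lt_mem_nhds (neg_lt_iff_pos_add'.2 hv)] with w hw
    have hw0 : 0 < 1 + w := neg_lt_iff_pos_add'.1 hw
    rw [Real.div_rpow hx.le hw0.le, Real.rpow_neg hw0.le, div_eq_mul_inv]
  · rw [neg_sub_left, neg_add', neg_sub_comm]
    ring

lemma integral_Ioo_comp_mul_rpow_sub_one {E : Type*} [NormedAddCommGroup E] [NormedSpace ℝ E]
    {θ x : ℝ} (hθ : 0 < θ) (hx : 0 < x) (g : ℝ → E) :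
    ∫ u in Set.Ioo (0 : ℝ) 1, g (x * u ^ (-(1 / θ)) - 1)
      = (θ * x ^ θ) • ∫ v in Set.Ioi (x - 1), (1 + v) ^ (-1 - θ) • g v := by
  have one_add_pos : ∀ v ∈ Set.Ioi (x - 1), 0 < 1 + v := fun v hv =>
    hx.trans (sub_lt_iff_lt_add'.1 hv)
  have hanti : AntitoneOn (fun v : ℝ => (x / (1 + v)) ^ θ) (Set.Ioi (x - 1)) := by
    intro v hv w hw hvw
    have hv0 := one_add_pos v hv
    have hw0 := one_add_pos w hw
    dsimp only
    gcongr
  rw [← image_div_one_add_rpow_Ioi hθ hx,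
    integral_image_eq_integral_deriv_smul_of_antitoneOn measurableSet_Ioi
      (fun v hv => (hasDerivAt_div_one_add_rpow θ hx (one_add_pos v hv)).hasDerivWithinAt) hanti,
    ← integral_smul]
  refine setIntegral_congr_fun measurableSet_Ioi fun v hv => ?_
  have hv0 := one_add_pos v hv
  have hinv : x * ((x / (1 + v)) ^ θ) ^ (-(1 / θ)) - 1 = v := by
    rw [← Real.rpow_mul (by positivity), mul_neg, mul_one_div_cancel hθ.ne', Real.rpow_neg_one,
      inv_div, mul_div_cancel₀ _ hx.ne', add_sub_cancel_left]
  simp only [hinv, neg_neg, mul_smul]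

lemma subsingleton_setOf_rpow_mul_eq {p a x : ℝ} (hp : p ≠ 0) (hax : a ≠ 0 ∨ x ≠ 0) :
    {u : ℝ | 0 ≤ u ∧ u ^ p * a = x}.Subsingleton := by
  rintro u ⟨hu, rfl⟩ w ⟨hw, hwu⟩
  have ha : a ≠ 0 := hax.elim id right_ne_zero_of_mul
  exact Real.rpow_left_injOn hp hu hw (mul_right_cancel₀ ha hwu.symm)

/-- The fixed-point equation of the generalized Dickman distribution with parameter `θ`: if `U` is
uniform on `[0, 1]` and `D` has law `ν` and is independent of `U`, then `U ^ (1 / θ) * (D + 1)` has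
law `ν`. Independence is encoded by the product measure. -/
def IsDickmanLaw (θ : ℝ) (ν : Measure ℝ) : Prop :=
  ((volume.restrict (Set.Icc (0 : ℝ) 1)).prod ν).map (fun p => p.1 ^ (1 / θ) * (p.2 + 1)) = ν

namespace IsDickmanLaw

lemma of_indepFun {Ω : Type*} [MeasurableSpace Ω] {P : Measure Ω} [IsFiniteMeasure P] {θ : ℝ}
    {D U : Ω → ℝ} (hD : Measurable D) (hU : Measurable U)
    (hUlaw : P.map U = volume.restrict (Set.Icc (0 : ℝ) 1)) (hindep : IndepFun U D P)
    (hfix : P.map (fun ω => U ω ^ (1 / θ) * (D ω + 1)) = P.map D) :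
    IsDickmanLaw θ (P.map D) := by
  rw [IsDickmanLaw, ← hUlaw,
    ← hindep.map_prod_eq_prod_map_map hU.aemeasurable hD.aemeasurable,
    Measure.map_map (by fun_prop) (hU.prodMk hD)]
  exact hfix

variable {θ : ℝ} {ν : Measure ℝ}

lemma measure_singleton_eq_zero [SFinite ν] (h : IsDickmanLaw θ ν) (hθ : θ ≠ 0) {x : ℝ}
    (hx : ∀ᵐ d ∂ν, d + 1 ≠ 0 ∨ x ≠ 0) : ν {x} = 0 := by
  have hf : Measurable fun p : ℝ × ℝ => p.1 ^ (1 / θ) * (p.2 + 1) := by fun_prop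
  rw [← h, Measure.map_apply hf (measurableSet_singleton x),
    Measure.prod_apply_symm (hf (measurableSet_singleton x))]
  refine lintegral_eq_zero_of_ae_eq_zero ?_
  filter_upwards [hx] with d hd
  rw [Measure.restrict_apply' measurableSet_Icc]
  refine Set.Subsingleton.measure_zero ?_ _
  exact (subsingleton_setOf_rpow_mul_eq (one_div_ne_zero hθ) hd).anti fun u hu => ⟨hu.2.1, hu.1⟩

lemma nullSingletonClass [SFinite ν] (h : IsDickmanLaw θ ν) (hθ : θ ≠ 0) :
    NullSingletonClass ν := by
  have singleton_null_of_ne_zero : ∀ x ≠ 0, ν {x} = 0 := fun x hx =>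
    h.measure_singleton_eq_zero hθ (ae_of_all _ fun _ => Or.inr hx)
  have ne_neg_one : ∀ᵐ d ∂ν, d ≠ -1 :=
    measure_eq_zero_iff_ae_notMem.1 (singleton_null_of_ne_zero (-1) (by norm_num))
  refine ⟨fun x => h.measure_singleton_eq_zero hθ ?_⟩
  filter_upwards [ne_neg_one] with d hd
  exact Or.inl fun hd0 => hd (eq_neg_of_add_eq_zero_left hd0)

variable [IsProbabilityMeasure ν]

lemma cdf_eq_integral_Ioo (h : IsDickmanLaw θ ν) (x : ℝ) :
    cdf ν x = ∫ u in Set.Ioo (0 : ℝ) 1, cdf ν (x * u ^ (-(1 / θ)) - 1) := by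
  have hf : Measurable fun p : ℝ × ℝ => p.1 ^ (1 / θ) * (p.2 + 1) := by fun_prop
  have hsection : ∀ u ∈ Set.Ioo (0 : ℝ) 1, ∀ d : ℝ,
      u ^ (1 / θ) * (d + 1) ≤ x ↔ d ≤ x * u ^ (-(1 / θ)) - 1 := by
    intro u hu d
    rw [Real.rpow_neg hu.1.le, ← div_eq_mul_inv, le_sub_iff_add_le,
      le_div_iff₀' (Real.rpow_pos_of_pos hu.1 _)]
  have hIic : ν (Set.Iic x)
      = ∫⁻ u in Set.Ioo (0 : ℝ) 1, ν (Set.Iic (x * u ^ (-(1 / θ)) - 1)) := by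
    conv_lhs => rw [← h]
    rw [Measure.map_apply hf measurableSet_Iic, Measure.prod_apply (hf measurableSet_Iic),
      ← restrict_Ioo_eq_restrict_Icc]
    exact setLIntegral_congr_fun measurableSet_Ioo fun u hu =>
      congrArg ν (Set.ext (hsection u hu))
  have hcdf : Measurable (cdf ν) := (monotone_cdf ν).measurable
  rw [integral_eq_lintegral_of_nonneg_ae (ae_of_all _ fun _ => cdf_nonneg _ _)
    (by fun_prop : Measurable _).aestronglyMeasurable]
  simp only [ofReal_cdf]
  rw [← hIic, cdf_eq_real, measureReal_def]

lemma cdf_eq_integral_Ioi (h : IsDickmanLaw θ ν) (hθ : 0 < θ) {x : ℝ} (hx : 0 < x) :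
    cdf ν x = θ * x ^ θ * ∫ v in Set.Ioi (x - 1), cdf ν v * (1 + v) ^ (-1 - θ) := by
  rw [h.cdf_eq_integral_Ioo x, integral_Ioo_comp_mul_rpow_sub_one hθ hx]
  simp only [smul_eq_mul, mul_comm (cdf ν _)]

lemma cdf_eq_const_mul_rpow (h : IsDickmanLaw θ ν) (hθ : 0 < θ) (hν : ∀ᵐ d ∂ν, 0 ≤ d)
    {x : ℝ} (hx : x ∈ Set.Icc (0 : ℝ) 1) :
    cdf ν x = (θ * ∫ v in Set.Ioi (0 : ℝ), cdf ν v * (1 + v) ^ (-1 - θ)) * x ^ θ := by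
  have := h.nullSingletonClass hθ.ne'
  rcases hx.1.eq_or_lt with rfl | hx0
  · rw [cdf_eq_zero_of_nonpos hν le_rfl, Real.zero_rpow hθ.ne', mul_zero]
  have hdomain : ∫ v in Set.Ioi (x - 1), cdf ν v * (1 + v) ^ (-1 - θ)
      = ∫ v in Set.Ioi (0 : ℝ), cdf ν v * (1 + v) ^ (-1 - θ) := by
    refine setIntegral_eq_of_subset_of_forall_sdiff_eq_zero measurableSet_Ioi
      (Set.Ioi_subset_Ioi (sub_nonpos.2 hx.2)) fun v hv => ?_
    rw [cdf_eq_zero_of_nonpos hν (not_lt.1 hv.2), zero_mul]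
  rw [h.cdf_eq_integral_Ioi hθ hx0, hdomain, mul_right_comm]

end IsDickmanLaw

/-- Equations (5.5)–(5.6) of Pinsky and their consequences: if `D ≥ 0`, `U` is uniform on
`[0,1]` and independent of `D`, and `U^{1/θ}(D+1)` has the same law as `D`, then the
distribution function `F` of `D` satisfies
`F x = θ x^θ ∫_{x−1}^∞ F v (1+v)^{−1−θ} dv` for `x > 0`, `F` is continuous, and
`F x = C_θ x^θ` on `[0,1]` with `C_θ = θ ∫_0^∞ F v (1+v)^{−1−θ} dv`. -/
theorem dickman_cdf_properties
    {Ω : Type*} [MeasurableSpace Ω] (P : Measure Ω) [IsProbabilityMeasure P]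
    (θ : ℝ) (hθ : 0 < θ)
    (D U : Ω → ℝ) (hDmeas : Measurable D) (hUmeas : Measurable U)
    (hDnonneg : ∀ᵐ ω ∂P, 0 ≤ D ω)
    (hU : Measure.map U P = volume.restrict (Set.Icc (0 : ℝ) 1))
    (hindep : IndepFun U D P)
    (hfix : Measure.map (fun ω => U ω ^ (1 / θ) * (D ω + 1)) P = Measure.map D P)
    (F : ℝ → ℝ) (hF : ∀ x, F x = (P {ω | D ω ≤ x}).toReal) :
    (∀ x : ℝ, 0 < x →
      F x = θ * x ^ θ * ∫ v in Set.Ioi (x - 1), F v * (1 + v) ^ (-1 - θ)) ∧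
    Continuous F ∧
    (∀ x ∈ Set.Icc (0 : ℝ) 1,
      F x = (θ * ∫ v in Set.Ioi (0 : ℝ), F v * (1 + v) ^ (-1 - θ)) * x ^ θ) := by
  have hν : IsDickmanLaw θ (P.map D) := .of_indepFun hDmeas hUmeas hU hindep hfix
  have : IsProbabilityMeasure (P.map D) := Measure.isProbabilityMeasure_map hDmeas.aemeasurable
  have := hν.nullSingletonClass hθ.ne'
  have hν_nonneg : ∀ᵐ d ∂P.map D, 0 ≤ d :=
    (ae_map_iff hDmeas.aemeasurable measurableSet_Ici).2 hDnonneg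
  obtain rfl : F = cdf (P.map D) := by
    ext x
    rw [hF, cdf_eq_real, map_measureReal_apply hDmeas measurableSet_Iic]
    rfl
  exact ⟨fun x hx => hν.cdf_eq_integral_Ioi hθ hx, continuous_cdf _,
    fun x hx => hν.cdf_eq_const_mul_rpow hθ hν_nonneg hx⟩
end

section
/- Let θ > 0, let D be a nonnegative random variable, and let U be uniformly distributed on [0,1] and independent of D, such that U^{1/θ}(D+1) has the same distribution as D. Let F(x) = P(D ≤ x). Then F is differentiable on (0,1) and on (1,∞), and its derivative p := F' satisfies: (1) p(x) = c_θ x^{θ−1} for x ∈ (0,1), where c_θ = θ² ∫_0^∞ F(v)(1+v)^{−1−θ} dv; (2) p(x) = (θ/x)(F(x) − F(x−1)) for x > 1; (3) p is differentiable on (1,∞) and satisfies x p'(x) + (1−θ) p(x) + θ p(x−1) = 0 for all x > 1; and (4) c_θ = θ E[(1+D)^{−θ}]. -/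
open MeasureTheory ProbabilityTheory Filter Topology

/-!
Conditioning on `D`, the event `U^{1/θ}(D + 1) ≤ x` has probability `(x / max x (1 + D))^θ`, so
`F x = x^θ E[max x (1 + D)^{-θ}]` for `x > 0`. Writing `y^{-θ} = θ ∫_y^∞ t^{-1-θ} dt` and applying
Fubini turns this into `F x = θ x^θ ∫_x^∞ F(t - 1) t^{-1-θ} dt`. Continuity of `F` allows
differentiating the tail integral, which gives `F' x = (θ / x)(F x - F(x - 1))` for all `x > 0`;
since the right-hand side is differentiable for `x > 1`, so is `F'`. For `x < 1` the maximum is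
`1 + D`, so `F x` is a constant multiple of `x^θ`.
-/

section

open Set

theorem measureReal_restrict_Icc_rpow_one_div_le {θ : ℝ} (hθ : 0 < θ) (y : ℝ) :
    (volume.restrict (Icc (0 : ℝ) 1)).real {u | u ^ (1 / θ) ≤ y} = max 0 (min 1 y) ^ θ := by
  rw [measureReal_restrict_apply' measurableSet_Icc]
  rcases lt_or_ge y 0 with hy | hy
  · have hempty : {u : ℝ | u ^ (1 / θ) ≤ y} ∩ Icc 0 1 = ∅ :=
      eq_empty_of_forall_notMem fun u ⟨huy, hu, _⟩ ↦
        (huy.trans_lt hy).not_ge (Real.rpow_nonneg hu _)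
    rw [hempty, measureReal_empty, max_eq_left ((min_le_right 1 y).trans hy.le),
      Real.zero_rpow hθ.ne']
  · have hmin : 0 ≤ min 1 y := le_min zero_le_one hy
    have hIcc : {u : ℝ | u ^ (1 / θ) ≤ y} ∩ Icc 0 1 = Icc 0 (min 1 y ^ θ) := by
      ext u
      suffices 0 ≤ u → (u ^ (1 / θ) ≤ y ∧ u ≤ 1 ↔ u ≤ min 1 y ^ θ) by
        simp only [mem_inter_iff, mem_ofPred_eq, mem_Icc]
        tauto
      intro hu
      rw [← Real.rpow_inv_le_iff_of_pos hu hmin hθ, le_min_iff, and_comm, one_div,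
        Real.rpow_inv_le_iff_of_pos hu zero_le_one hθ, Real.one_rpow]
    rw [hIcc, Real.volume_real_Icc, sub_zero, max_eq_right hmin,
      max_eq_left (Real.rpow_nonneg hmin θ)]

section LayerCake

variable {Ω E : Type*} [MeasurableSpace Ω] {P : Measure Ω} [IsFiniteMeasure P] {X : Ω → ℝ}
  [NormedAddCommGroup E] [NormedSpace ℝ E] [CompleteSpace E]

theorem integral_integral_Ioi_max (hX : Measurable X) {ν : Measure ℝ} [SFinite ν]
    [NullSingletonClass ν] {g : ℝ → E} {x : ℝ} (hg : IntegrableOn g (Ioi x) ν) :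
    ∫ ω, ∫ t in Ioi (max x (X ω)), g t ∂ν ∂P =
      ∫ t in Ioi x, P.real {ω | X ω ≤ t} • g t ∂ν := by
  let f : Ω → ℝ → E := fun ω t ↦ {p : Ω × ℝ | X p.1 ≤ p.2}.indicator (fun p ↦ g p.2) (ω, t)
  have hf : Integrable (Function.uncurry f) (P.prod (ν.restrict (Ioi x))) :=
    (hg.comp_snd P).indicator (measurableSet_le (hX.comp measurable_fst) measurable_snd)
  calc ∫ ω, ∫ t in Ioi (max x (X ω)), g t ∂ν ∂P
      = ∫ ω, ∫ t in Ioi x, f ω t ∂ν ∂P := by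
        congr with ω
        have hset : (Ioi x ∩ Ici (X ω) : Set ℝ) =ᵐ[ν] Ioi (max x (X ω)) := by
          rw [← Ioi_inter_Ioi]
          exact (ae_eq_refl _).inter Ioi_ae_eq_Ici.symm
        rw [← setIntegral_congr_set hset, ← setIntegral_indicator measurableSet_Ici]
        rfl
    _ = ∫ t in Ioi x, ∫ ω, f ω t ∂P ∂ν := integral_integral_swap hf
    _ = ∫ t in Ioi x, P.real {ω | X ω ≤ t} • g t ∂ν := by
        congr with t
        rw [← integral_indicator_const (g t) (measurableSet_le hX measurable_const)]
        rfl

theorem integral_max_rpow_neg (hX : Measurable X) {θ x : ℝ} (hθ : 0 < θ) (hx : 0 < x) :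
    ∫ ω, max x (X ω) ^ (-θ) ∂P =
      θ * ∫ t in Ioi x, P.real {ω | X ω ≤ t} * t ^ (-1 - θ) := by
  have hexp : -1 - θ < -1 := by linarith
  have hprim (y : ℝ) (hy : 0 < y) : y ^ (-θ) = θ * ∫ t in Ioi y, t ^ (-1 - θ) := by
    rw [integral_Ioi_rpow_of_lt hexp hy, show -1 - θ + 1 = -θ by ring]
    field_simp
  calc ∫ ω, max x (X ω) ^ (-θ) ∂P
      = ∫ ω, θ * (∫ t in Ioi (max x (X ω)), t ^ (-1 - θ)) ∂P :=
        integral_congr_ae (ae_of_all P fun ω ↦ hprim _ (lt_max_of_lt_left hx))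
    _ = θ * ∫ t in Ioi x, P.real {ω | X ω ≤ t} * t ^ (-1 - θ) := by
        rw [integral_const_mul, integral_integral_Ioi_max hX (integrableOn_Ioi_rpow_of_lt hexp hx)]
        rfl

end LayerCake

theorem integral_max_one_add_rpow_neg {θ x : ℝ} (μ : Measure ℝ) [IsProbabilityMeasure μ]
    (hθ : 0 < θ) (hx : 0 < x) :
    ∫ d, max x (1 + d) ^ (-θ) ∂μ = θ * ∫ t in Ioi x, cdf μ (t - 1) * t ^ (-1 - θ) := by
  have hset (t : ℝ) : {d : ℝ | 1 + d ≤ t} = Iic (t - 1) :=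
    Set.ext fun _ ↦ by simp only [mem_ofPred_eq, mem_Iic, le_sub_iff_add_le']
  simp_rw [integral_max_rpow_neg (measurable_const_add 1) hθ hx, hset, cdf_eq_real]

theorem integral_one_add_rpow_neg {θ : ℝ} {μ : Measure ℝ} [IsProbabilityMeasure μ]
    (hμ : ∀ᵐ d ∂μ, 0 ≤ d) (hθ : 0 < θ) :
    ∫ d, (1 + d) ^ (-θ) ∂μ = θ * ∫ v in Ioi (0 : ℝ), cdf μ v * (1 + v) ^ (-1 - θ) := by
  have hmax : ∫ d, (1 + d) ^ (-θ) ∂μ = ∫ d, max 1 (1 + d) ^ (-θ) ∂μ :=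
    integral_congr_ae <| hμ.mono fun d hd ↦ by
      simp only [max_eq_right (show 1 ≤ 1 + d by linarith)]
  have hshift := (measurePreserving_add_left volume (1 : ℝ)).setIntegral_preimage_emb
    (measurableEmbedding_addLeft 1) (fun t ↦ cdf μ (t - 1) * t ^ (-1 - θ)) (Ioi 1)
  simp only [add_sub_cancel_left, preimage_const_add_Ioi, sub_self] at hshift
  rw [hmax, integral_max_one_add_rpow_neg μ hθ one_pos, hshift]

theorem hasDerivAt_integral_Ioi {E : Type*} [NormedAddCommGroup E] [NormedSpace ℝ E]
    [CompleteSpace E] {g : ℝ → E} {a x : ℝ} (hg : IntegrableOn g (Ioi a)) (hax : a < x)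
    (hgm : StronglyMeasurableAtFilter g (𝓝 x)) (hgx : ContinuousAt g x) :
    HasDerivAt (fun y ↦ ∫ t in Ioi y, g t) (-g x) x := by
  have hint : IntervalIntegrable g volume a x :=
    (intervalIntegrable_iff_integrableOn_Ioc_of_le hax.le).2
      (hg.mono_set Ioc_subset_Ioi_self)
  refine ((intervalIntegral.integral_hasDerivAt_right hint hgm hgx).const_sub
    (∫ t in Ioi a, g t)).congr_of_eventuallyEq ?_
  filter_upwards [lt_mem_nhds hax] with y hy
  rw [← intervalIntegral.integral_Ioi_sub_Ioi hg hy.le, sub_sub_cancel]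

theorem hasDerivAt_integral_Ioi_cdf_sub_one_mul_rpow {μ : Measure ℝ} {θ x : ℝ} (hθ : 0 < θ)
    (hx : 0 < x) (hcont : ContinuousAt (cdf μ) (x - 1)) :
    HasDerivAt (fun y ↦ ∫ t in Ioi y, cdf μ (t - 1) * t ^ (-1 - θ))
      (-(cdf μ (x - 1) * x ^ (-1 - θ))) x := by
  have hmeas : Measurable fun t ↦ cdf μ (t - 1) :=
    (monotone_cdf μ).measurable.comp (measurable_sub_const 1)
  have hbound (t : ℝ) : ‖cdf μ (t - 1)‖ ≤ 1 := by
    rw [Real.norm_of_nonneg (cdf_nonneg μ _)]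
    exact cdf_le_one μ _
  have hint : IntegrableOn (fun t ↦ cdf μ (t - 1) * t ^ (-1 - θ)) (Ioi (x / 2)) :=
    (integrableOn_Ioi_rpow_of_lt (by linarith) (half_pos hx)).bdd_mul
      hmeas.aestronglyMeasurable (ae_of_all _ hbound)
  have hfilter : StronglyMeasurableAtFilter (fun t ↦ cdf μ (t - 1) * t ^ (-1 - θ)) (𝓝 x) :=
    (hmeas.mul (measurable_id.pow_const _)).stronglyMeasurable.stronglyMeasurableAtFilter
  exact hasDerivAt_integral_Ioi hint (half_lt_self hx) hfilter <|
    (hcont.comp (f := fun t ↦ t - 1) (by fun_prop)).mul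
      (Real.continuousAt_rpow_const x _ (Or.inl hx.ne'))

/-- `μ` is the generalized Dickman law GD(θ): it is carried by `[0, ∞)` and is the law of
`U^{1/θ}(D + 1)`, where `U` is uniform on `[0, 1]` and `D` has law `μ` and is independent of `U`.
The pair `p = (U, D)` is encoded by its law, a product measure. -/
structure IsDickmanLaw_s17 (θ : ℝ) (μ : Measure ℝ) : Prop where
  ae_nonneg : ∀ᵐ d ∂μ, 0 ≤ d
  map_eq : ((volume.restrict (Icc (0 : ℝ) 1)).prod μ).map
    (fun p ↦ p.1 ^ (1 / θ) * (p.2 + 1)) = μ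

namespace IsDickmanLaw_s17

theorem map_of_indepFun {Ω : Type*} [MeasurableSpace Ω] {P : Measure Ω} [IsFiniteMeasure P]
    {θ : ℝ} {D U : Ω → ℝ} (hD : AEMeasurable D P) (hUm : AEMeasurable U P)
    (hD0 : ∀ᵐ ω ∂P, 0 ≤ D ω) (hU : P.map U = volume.restrict (Icc 0 1))
    (hindep : IndepFun U D P)
    (hfix : P.map (fun ω ↦ U ω ^ (1 / θ) * (D ω + 1)) = P.map D) :
    IsDickmanLaw_s17 θ (P.map D) where
  ae_nonneg := (ae_map_iff hD measurableSet_Ici).2 hD0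
  map_eq := by
    rw [← hU, ← hindep.map_prod_eq_prod_map_map hUm hD,
      AEMeasurable.map_map_of_aemeasurable (by fun_prop) (hUm.prodMk hD)]
    exact hfix

variable {θ : ℝ} {μ : Measure ℝ} [IsProbabilityMeasure μ] {x : ℝ}

theorem cdf_eq_integral (h : IsDickmanLaw_s17 θ μ) (hθ : 0 < θ) (x : ℝ) :
    cdf μ x = ∫ d, max 0 (min 1 (x / (1 + d))) ^ θ ∂μ := by
  have hmeas : Measurable fun p : ℝ × ℝ ↦ p.1 ^ (1 / θ) * (p.2 + 1) := by fun_prop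
  have hS : MeasurableSet {p : ℝ × ℝ | p.1 ^ (1 / θ) * (p.2 + 1) ≤ x} :=
    measurableSet_le hmeas measurable_const
  calc cdf μ x = μ.real (Iic x) := cdf_eq_real μ x
    _ = ((volume.restrict (Icc (0 : ℝ) 1)).prod μ).real
          {p | p.1 ^ (1 / θ) * (p.2 + 1) ≤ x} := by
        conv_lhs => rw [← h.map_eq, map_measureReal_apply hmeas measurableSet_Iic]
        rfl
    _ = ∫ d, (volume.restrict (Icc (0 : ℝ) 1)).real {u | u ^ (1 / θ) * (d + 1) ≤ x} ∂μ := by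
        rw [measureReal_def, Measure.prod_apply_symm hS,
          ← integral_toReal (measurable_measure_prodMk_right hS).aemeasurable
            (ae_of_all _ fun _ ↦ measure_lt_top _ _)]
        rfl
    _ = ∫ d, max 0 (min 1 (x / (1 + d))) ^ θ ∂μ := by
        refine integral_congr_ae (h.ae_nonneg.mono fun d hd ↦ ?_)
        have hd' : 0 < 1 + d := add_pos_of_pos_of_nonneg one_pos hd
        simp only [add_comm d 1, ← le_div_iff₀ hd', measureReal_restrict_Icc_rpow_one_div_le hθ]

theorem continuous_cdf (h : IsDickmanLaw_s17 θ μ) (hθ : 0 < θ) : Continuous (cdf μ) := by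
  rw [funext (h.cdf_eq_integral hθ)]
  refine continuous_of_dominated (bound := fun _ ↦ 1) (fun x ↦ ?_) (fun x ↦ ae_of_all _ fun d ↦ ?_)
    (integrable_const 1) (ae_of_all _ fun d ↦ ?_)
  · exact Measurable.aestronglyMeasurable (by fun_prop)
  · have h0 : 0 ≤ max 0 (min 1 (x / (1 + d))) := le_max_left _ _
    rw [Real.norm_of_nonneg (Real.rpow_nonneg h0 θ)]
    exact Real.rpow_le_one h0 (max_le zero_le_one (min_le_left _ _)) hθ.le
  · exact Continuous.rpow_const (by fun_prop) fun _ ↦ Or.inr hθ.le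

theorem cdf_eq_zero_of_nonpos (h : IsDickmanLaw_s17 θ μ) (hθ : 0 < θ) (hx : x ≤ 0) :
    cdf μ x = 0 := by
  rw [h.cdf_eq_integral hθ]
  refine integral_eq_zero_of_ae (h.ae_nonneg.mono fun d hd ↦ ?_)
  have hdiv : x / (1 + d) ≤ 0 := div_nonpos_of_nonpos_of_nonneg hx (by linarith)
  simp [max_eq_left ((min_le_right _ _).trans hdiv), Real.zero_rpow hθ.ne']

theorem cdf_eq_rpow_mul_integral_max (h : IsDickmanLaw_s17 θ μ) (hθ : 0 < θ) (hx : 0 < x) :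
    cdf μ x = x ^ θ * ∫ d, max x (1 + d) ^ (-θ) ∂μ := by
  rw [h.cdf_eq_integral hθ, ← integral_const_mul]
  refine integral_congr_ae (h.ae_nonneg.mono fun d hd ↦ ?_)
  have hd' : 0 < 1 + d := by linarith
  have hmax : 0 < max x (1 + d) := lt_max_of_lt_left hx
  have hclamp : max 0 (min 1 (x / (1 + d))) = x / max x (1 + d) := by
    rw [max_eq_right (by positivity)]
    rcases le_total x (1 + d) with hxd | hdx
    · rw [max_eq_right hxd, min_eq_right ((div_le_one hd').2 hxd)]
    · rw [max_eq_left hdx, min_eq_left ((one_le_div hd').2 hdx), div_self hx.ne']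
  simp only [hclamp, Real.div_rpow hx.le hmax.le, Real.rpow_neg hmax.le]
  exact div_eq_mul_inv _ _

theorem hasDerivAt_cdf (h : IsDickmanLaw_s17 θ μ) (hθ : 0 < θ) (hx : 0 < x) :
    HasDerivAt (cdf μ) (θ / x * (cdf μ x - cdf μ (x - 1))) x := by
  have hcdf {y : ℝ} (hy : 0 < y) :
      cdf μ y = y ^ θ * (θ * ∫ t in Ioi y, cdf μ (t - 1) * t ^ (-1 - θ)) := by
    rw [h.cdf_eq_rpow_mul_integral_max hθ hy, integral_max_one_add_rpow_neg μ hθ hy]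
  have htail := hasDerivAt_integral_Ioi_cdf_sub_one_mul_rpow hθ hx
    (h.continuous_cdf hθ).continuousAt
  have hprod := (Real.hasDerivAt_rpow_const (p := θ) (Or.inl hx.ne')).mul (htail.const_mul θ)
  refine (hprod.congr_of_eventuallyEq ((lt_mem_nhds hx).mono fun y hy ↦ hcdf hy)).congr_deriv ?_
  have hcancel : x ^ θ * x ^ (-1 - θ) = x⁻¹ := by
    rw [← Real.rpow_add hx, add_sub_cancel, Real.rpow_neg_one]
  rw [Real.rpow_sub_one hx.ne', hcdf hx]
  linear_combination -θ * cdf μ (x - 1) * hcancel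

theorem deriv_cdf (h : IsDickmanLaw_s17 θ μ) (hθ : 0 < θ) (hx : 0 < x) :
    deriv (cdf μ) x = θ / x * (cdf μ x - cdf μ (x - 1)) :=
  (h.hasDerivAt_cdf hθ hx).deriv

theorem deriv_cdf_of_lt_one (h : IsDickmanLaw_s17 θ μ) (hθ : 0 < θ) (hx0 : 0 < x) (hx1 : x < 1) :
    deriv (cdf μ) x = (θ * ∫ d, (1 + d) ^ (-θ) ∂μ) * x ^ (θ - 1) := by
  have hmax : ∫ d, max x (1 + d) ^ (-θ) ∂μ = ∫ d, (1 + d) ^ (-θ) ∂μ :=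
    integral_congr_ae <| h.ae_nonneg.mono fun d hd ↦ by
      simp only [max_eq_right (show x ≤ 1 + d by linarith)]
  rw [h.deriv_cdf hθ hx0, h.cdf_eq_zero_of_nonpos hθ (show x - 1 ≤ 0 by linarith),
    h.cdf_eq_rpow_mul_integral_max hθ hx0, hmax, Real.rpow_sub_one hx0.ne']
  ring

theorem hasDerivAt_deriv_cdf (h : IsDickmanLaw_s17 θ μ) (hθ : 0 < θ) (hx : 1 < x) :
    HasDerivAt (deriv (cdf μ))
      (((θ - 1) * deriv (cdf μ) x - θ * deriv (cdf μ) (x - 1)) / x) x := by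
  have hx0 : 0 < x := one_pos.trans hx
  have hF := h.hasDerivAt_cdf hθ hx0
  have hFs := (h.hasDerivAt_cdf hθ (sub_pos.2 hx)).comp_sub_const x 1
  have hquot := ((hF.sub hFs).const_mul θ).div (hasDerivAt_id x) hx0.ne'
  rw [← h.deriv_cdf hθ hx0, ← h.deriv_cdf hθ (sub_pos.2 hx)] at hquot
  refine (hquot.congr_of_eventuallyEq ?_).congr_deriv ?_
  · filter_upwards [lt_mem_nhds hx0] with y hy
    rw [h.deriv_cdf hθ hy, div_mul_eq_mul_div]
    rfl
  · have hp : x * deriv (cdf μ) x = θ * (cdf μ x - cdf μ (x - 1)) := by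
      rw [h.deriv_cdf hθ hx0]; field_simp
    simp only [id, Pi.sub_apply, ← hp]
    field_simp
    ring

end IsDickmanLaw_s17

end

/-- Equations (5.7)–(5.9) of Pinsky: if `D ≥ 0`, `U` is uniform on `[0,1]` and independent
of `D`, and `U^{1/θ}(D+1)` has the same law as `D`, then the distribution function `F` of
`D` is differentiable on `(0,1)` and on `(1,∞)`, and its derivative `p = F'` satisfies
`p x = c_θ x^{θ−1}` on `(0,1)` with `c_θ = θ² ∫_0^∞ F v (1+v)^{−1−θ} dv`,
`p x = (θ/x)(F x − F (x−1))` for `x > 1`, `p` is differentiable on `(1,∞)` with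
`x p' x + (1−θ) p x + θ p (x−1) = 0`, and `c_θ = θ E[(1+D)^{−θ}]`. -/
theorem dickman_density_properties
    {Ω : Type*} [MeasurableSpace Ω] (P : Measure Ω) [IsProbabilityMeasure P]
    (θ : ℝ) (hθ : 0 < θ)
    (D U : Ω → ℝ) (hDmeas : Measurable D) (hUmeas : Measurable U)
    (hDnonneg : ∀ᵐ ω ∂P, 0 ≤ D ω)
    (hU : Measure.map U P = volume.restrict (Set.Icc (0 : ℝ) 1))
    (hindep : IndepFun U D P)
    (hfix : Measure.map (fun ω => U ω ^ (1 / θ) * (D ω + 1)) P = Measure.map D P)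
    (F : ℝ → ℝ) (hF : ∀ x, F x = (P {ω | D ω ≤ x}).toReal) :
    (∀ x ∈ Set.Ioo (0 : ℝ) 1, DifferentiableAt ℝ F x) ∧
    (∀ x ∈ Set.Ioi (1 : ℝ), DifferentiableAt ℝ F x) ∧
    (∀ x ∈ Set.Ioo (0 : ℝ) 1,
      deriv F x = (θ ^ 2 * ∫ v in Set.Ioi (0 : ℝ), F v * (1 + v) ^ (-1 - θ)) *
        x ^ (θ - 1)) ∧
    (∀ x ∈ Set.Ioi (1 : ℝ), deriv F x = (θ / x) * (F x - F (x - 1))) ∧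
    (∀ x ∈ Set.Ioi (1 : ℝ), DifferentiableAt ℝ (deriv F) x ∧
      x * deriv (deriv F) x + (1 - θ) * deriv F x + θ * deriv F (x - 1) = 0) ∧
    θ ^ 2 * ∫ v in Set.Ioi (0 : ℝ), F v * (1 + v) ^ (-1 - θ) =
      θ * ∫ ω, (1 + D ω) ^ (-θ) ∂P := by
  have : IsProbabilityMeasure (P.map D) := Measure.isProbabilityMeasure_map hDmeas.aemeasurable
  have h : IsDickmanLaw_s17 θ (P.map D) := .map_of_indepFun hDmeas.aemeasurable
    hUmeas.aemeasurable hDnonneg hU hindep hfix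
  obtain rfl : F = cdf (P.map D) := funext fun x ↦ by
    rw [hF, cdf_eq_real, map_measureReal_apply hDmeas measurableSet_Iic]
    rfl
  have hc : θ ^ 2 * ∫ v in Set.Ioi (0 : ℝ), cdf (P.map D) v * (1 + v) ^ (-1 - θ) =
      θ * ∫ d, (1 + d) ^ (-θ) ∂P.map D := by
    rw [integral_one_add_rpow_neg h.ae_nonneg hθ, sq, mul_assoc]
  refine ⟨fun x hx ↦ (h.hasDerivAt_cdf hθ hx.1).differentiableAt,
    fun x hx ↦ (h.hasDerivAt_cdf hθ (one_pos.trans hx)).differentiableAt,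
    fun x hx ↦ hc ▸ h.deriv_cdf_of_lt_one hθ hx.1 hx.2,
    fun x hx ↦ h.deriv_cdf hθ (one_pos.trans hx), fun x hx ↦ ?_, ?_⟩
  · have hp := h.hasDerivAt_deriv_cdf hθ hx
    refine ⟨hp.differentiableAt, ?_⟩
    rw [hp.deriv, mul_div_cancel₀ _ (one_pos.trans hx).ne']
    ring
  · rw [hc, integral_map hDmeas.aemeasurable (Measurable.aestronglyMeasurable (by fun_prop))]
end
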